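/- arXiv:1908.10086 — 7 statements merged into one kernel-verified Lean document; each statement's English description precedes it below -/
import Mathlib

section
/- Let V be a type, t : V a destination, f : V → V a forwarding function with f t = t, and d : V → ℕ a distance labeling, i.e. d t = 0 and d v = d (f v) + 1 for every v ≠ t. Then the forwarding path from any node is simple: for every v : V and all indices i < j ≤ d v, the iterates f^[i] v and f^[j] v are distinct. -/
theorem apply_iterate_add_eq_of_le {V : Type*} {f : V → V} {d : V → ℕ}
    (hstep : ∀ v, d v ≠ 0 → d v = d (f v) + 1) {v : V} {k : ℕ} (hk : k ≤ d v) :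
    d (f^[k] v) + k = d v := by
  induction k with
  | zero => rfl
  | succ k ih =>
    have ih : d (f^[k] v) + k = d v := ih (Nat.le_of_succ_le hk)
    have hpos : d (f^[k] v) ≠ 0 := by omega
    calc d (f^[k + 1] v) + (k + 1)
        = d (f (f^[k] v)) + 1 + k := by rw [Function.iterate_succ_apply']; ring
      _ = d (f^[k] v) + k := by rw [← hstep _ hpos]
      _ = d v := ih

/-- Every zero of `d` plays the role of a destination. -/
theorem distance_labeling_path_simple_general {V : Type*} {f : V → V} {d : V → ℕ}
    (hstep : ∀ v, d v ≠ 0 → d v = d (f v) + 1) (v : V) :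
    Set.InjOn (fun k ↦ f^[k] v) (Set.Iic (d v)) := by
  intro i hi j hj (hij : f^[i] v = f^[j] v)
  have hsum : d (f^[j] v) + i = d (f^[j] v) + j :=
    calc d (f^[j] v) + i
        = d (f^[i] v) + i := by rw [hij]
      _ = d v := apply_iterate_add_eq_of_le hstep hi
      _ = d (f^[j] v) + j := (apply_iterate_add_eq_of_le hstep hj).symm
  exact Nat.add_left_cancel hsum

/-- Under a distance labeling, the forwarding path from any node is simple:
the first `d v` iterates are pairwise distinct. -/
theorem distance_labeling_path_simple
    {V : Type*} (t : V) (f : V → V) (d : V → ℕ)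
    (ht : f t = t) (hd0 : d t = 0)
    (hstep : ∀ v : V, v ≠ t → d v = d (f v) + 1) :
    ∀ v : V, ∀ i j : ℕ, i < j → j ≤ d v → f^[i] v ≠ f^[j] v := by
  have hpos (w : V) (hw : d w ≠ 0) : d w = d (f w) + 1 := hstep w fun hwt ↦ hw (hwt ▸ hd0)
  exact fun v i j hij hj ↦
    (distance_labeling_path_simple_general hpos v).ne (hij.le.trans hj) hj hij.ne
end

section
/- Let V be a type, t : V a destination, f : V → V, d : V → ℕ with d t = 0, and let S ⊆ V be a set of updated nodes such that t ∈ S and for every v ∈ S with v ≠ t one has f v ∈ S and d v = d (f v) + 1. Then for every v ∈ S: all iterates f^[k] v for k ≤ d v lie in S, and f^[d v] v = t. (Invariant of the reverse update scheme of Theorem 1: at any intermediate stage of the asynchronous update, every updated node forwards along updated nodes to the destination, so the partially deployed new path is blackhole- and loop-free.) -/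
/-!
Each step from a node of `S` with nonzero label stays in `S` and lowers the label by one, so after
`k ≤ d v` steps from `v` the label is exactly `d v - k`. The node reached after `d v` steps thus has
label `0`, which only `t` can have in `S`: the label of any other node of `S` is positive.
-/

theorem iterate_mem_and_label_eq_add {V : Type*} {f : V → V} {d : V → ℕ} {S : Set V}
    (hstep : ∀ v ∈ S, d v ≠ 0 → f v ∈ S ∧ d v = d (f v) + 1) {v : V} (hv : v ∈ S) {k : ℕ}
    (hk : k ≤ d v) : f^[k] v ∈ S ∧ d v = d (f^[k] v) + k := by
  induction k with
  | zero => exact ⟨hv, rfl⟩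
  | succ k ih =>
    obtain ⟨hmem, hlabel⟩ := ih (by omega)
    have hpos : d (f^[k] v) ≠ 0 := by omega
    obtain ⟨hmem_next, hlabel_next⟩ := hstep _ hmem hpos
    rw [Function.iterate_succ_apply']
    exact ⟨hmem_next, by omega⟩

/-- Invariant of the reverse update scheme of Theorem 1: at any intermediate
stage of the asynchronous update, every updated node forwards along updated
nodes to the destination, so the partially deployed new path is blackhole-
and loop-free. -/
theorem reverse_update_invariant
    {V : Type*} (t : V) (f : V → V) (d : V → ℕ) (S : Set V)
    (hd0 : d t = 0) (htS : t ∈ S)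
    (hS : ∀ v ∈ S, v ≠ t → f v ∈ S ∧ d v = d (f v) + 1) :
    ∀ v ∈ S, (∀ k : ℕ, k ≤ d v → f^[k] v ∈ S) ∧ f^[d v] v = t := by
  intro v hv
  have hstep : ∀ u ∈ S, d u ≠ 0 → f u ∈ S ∧ d u = d (f u) + 1 := fun u hu hdu ↦
    hS u hu fun hut ↦ hdu (hut ▸ hd0)
  refine ⟨fun k hk ↦ (iterate_mem_and_label_eq_add hstep hv hk).1, ?_⟩
  obtain ⟨hmem, hlabel⟩ := iterate_mem_and_label_eq_add hstep hv le_rfl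
  have hzero : d (f^[d v] v) = 0 := by omega
  by_contra hne
  exact Nat.succ_ne_zero _ ((hS _ hmem hne).2.symm.trans hzero)
end

section
/- Let V be a finite type, s t : V with s ≠ t, and f : V → V a forwarding function with f t = t such that (i) f is injective on non-destination nodes, i.e. for all u v ≠ t, f u = f v implies u = v, and (ii) no non-destination node forwards to the source, i.e. f v ≠ s for every v ≠ t. Then the packets starting at the source reach the destination: there exists k with f^[k] s = t. (Correctness of the predecessor–successor labeling scheme of Section IV: consistent predecessor labels make f injective and make s have no predecessor, so by a connectivity argument the path from s cannot loop and reaches t.) -/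
/-! Injectivity pulls a coincidence `f^[m] s = f^[n] s` with `m < n` back step by step to
`s = f^[n - m] s`, which is impossible because `s` has no predecessor. A route that never reached
the destination would therefore visit infinitely many nodes. -/

theorem iterate_apply_injective_of_injOn {α : Type*} {f : α → α} {S : Set α} {x : α}
    (hf : Set.InjOn f S) (hx : x ∉ f '' S) (hS : ∀ n, f^[n] x ∈ S) :
    Function.Injective fun n : ℕ => f^[n] x := by
  refine Function.Injective.of_lt_imp_ne fun m => ?_
  induction m with
  | zero =>
    rintro (_ | n) hlt heq
    · exact hlt.false
    · exact hx ⟨f^[n] x, hS n, (f.iterate_succ_apply' n x).symm.trans heq.symm⟩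
  | succ m ih =>
    rintro (_ | n) hlt heq
    · exact absurd hlt m.succ.not_lt_zero
    · have heq' : f (f^[m] x) = f (f^[n] x) := by
        simpa only [Function.iterate_succ_apply'] using heq
      exact ih n (Nat.succ_lt_succ_iff.mp hlt) (hf (hS m) (hS n) heq')

theorem predecessor_successor_reaches_destination_general {V : Type*} {f : V → V} {D : Set V}
    {s : V} (hinj : Set.InjOn f Dᶜ) (hsrc : s ∉ f '' Dᶜ)
    (hfin : (Set.range fun k : ℕ => f^[k] s).Finite) :
    ∃ k : ℕ, f^[k] s ∈ D := by
  by_contra! havoid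
  exact Set.infinite_range_of_injective
    (iterate_apply_injective_of_injOn hinj hsrc havoid) hfin

/-- Correctness of the predecessor–successor labeling scheme (Section IV):
if `f` is injective on non-destination nodes and no non-destination node
forwards to the source, then packets starting at the source reach the
destination. -/
theorem predecessor_successor_reaches_destination
    {V : Type*} [Fintype V] (s t : V) (f : V → V)
    (hst : s ≠ t) (ht : f t = t)
    (hinj : ∀ u v : V, u ≠ t → v ≠ t → f u = f v → u = v)
    (hsrc : ∀ v : V, v ≠ t → f v ≠ s) :
    ∃ k : ℕ, f^[k] s = t :=
  predecessor_successor_reaches_destination_general (D := {t})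
    (fun u hu v hv => hinj u v hu hv) (fun ⟨v, hv, hvs⟩ => hsrc v hv hvs) (Set.toFinite _)
end

section
/- Let V be a finite type, t : V a destination, f : V → V with f t = t, and ver, dep : V → ℕ labels such that for every v ≠ t either ver (f v) > ver v, or ver (f v) = ver v and dep (f v) < dep v. Then every packet reaches the destination: for every v : V there exists k < card V with f^[k] v = t. (Reachability part of Theorem 2: along any forwarding path the pair (version, depth) strictly increases in version or decreases in depth within the same version, so in a finite network the path cannot repeat a node and must end at the destination.) -/
/-!
Order the pairs (version, depth) lexicographically, with the order on depths reversed: the label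
strictly increases at every hop away from a node other than the destination. Hence the first
`card V + 1` nodes of a forwarding path that has not reached the destination in fewer than `card V`
hops would be pairwise distinct.
-/

section Potential

variable {V α : Type*} [Preorder α] {f : V → V} {φ : V → α} {s : Set V}

theorem strictMonoOn_potential_iterate (hφ : ∀ v ∉ s, φ v < φ (f v)) {v : V} {n : ℕ}
    (hs : ∀ k < n, f^[k] v ∉ s) : StrictMonoOn (fun k ↦ φ (f^[k] v)) (Set.Iic n) := by
  refine strictMonoOn_Iic_of_lt_succ fun k hk ↦ ?_
  simpa only [Nat.succ_eq_succ, Function.iterate_succ_apply'] using hφ _ (hs k hk)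

theorem injOn_iterate_of_potential_lt (hφ : ∀ v ∉ s, φ v < φ (f v)) {v : V} {n : ℕ}
    (hs : ∀ k < n, f^[k] v ∉ s) : Set.InjOn (fun k ↦ f^[k] v) (Set.Iic n) :=
  Set.InjOn.of_comp (g := φ) (strictMonoOn_potential_iterate hφ hs).injOn

theorem exists_iterate_mem_of_potential_lt [Fintype V] (hφ : ∀ v ∉ s, φ v < φ (f v)) (v : V) :
    ∃ k < Fintype.card V, f^[k] v ∈ s := by
  by_contra! hs
  have hinj : Set.InjOn (fun k ↦ f^[k] v) (Finset.Iic (Fintype.card V)) := by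
    simpa only [Finset.coe_Iic] using injOn_iterate_of_potential_lt hφ hs
  have hcard : Fintype.card V + 1 ≤ Fintype.card V := by
    simpa only [Nat.card_Iic, Finset.card_univ] using
      Finset.card_le_card_of_injOn _ (fun k _ ↦ Finset.mem_univ (f^[k] v)) hinj
  exact Nat.not_succ_le_self _ hcard

end Potential

theorem version_depth_reaches_destination_general
    {V α β : Type*} [Fintype V] [Preorder α] [Preorder β] (t : V) (f : V → V)
    (ver : V → α) (dep : V → β)
    (hlab : ∀ v : V, v ≠ t →
      ver (f v) > ver v ∨ (ver (f v) = ver v ∧ dep (f v) < dep v)) :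
    ∀ v : V, ∃ k : ℕ, k < Fintype.card V ∧ f^[k] v = t := by
  let label (v : V) : α ×ₗ βᵒᵈ := toLex (ver v, OrderDual.toDual (dep v))
  have label_lt (v : V) (hv : v ∉ ({t} : Set V)) : label v < label (f v) :=
    Prod.Lex.toLex_lt_toLex.mpr ((hlab v hv).imp_right (And.imp_left Eq.symm))
  exact exists_iterate_mem_of_potential_lt label_lt

/-- Reachability part of Theorem 2: with a version-depth labeling on a finite
network, every packet reaches the destination within fewer than `card V`
hops. -/
theorem version_depth_reaches_destination
    {V : Type*} [Fintype V] (t : V) (f : V → V) (ver dep : V → ℕ)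
    (ht : f t = t)
    (hlab : ∀ v : V, v ≠ t →
      ver (f v) > ver v ∨ (ver (f v) = ver v ∧ dep (f v) < dep v)) :
    ∀ v : V, ∃ k : ℕ, k < Fintype.card V ∧ f^[k] v = t :=
  version_depth_reaches_destination_general t f ver dep hlab
end

section
/- Let V be a type, t : V, f : V → V, and ver, dep : V → ℕ arbitrary labels. If there is a forwarding loop avoiding the destination, i.e. some v ≠ t and k ≥ 1 with f^[k] v = v and f^[i] v ≠ t for all i < k, then some node on the loop fails the local check: there exists i < k such that, for u = f^[i] v, neither ver (f u) > ver u nor (ver (f u) = ver u and dep (f u) < dep u). (Local detectability of loops in Theorem 2: if every node on a loop passed the local version-depth check, following the loop back to its start would force the start node to have a strictly larger version number or strictly smaller depth than itself, a contradiction.) -/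
/-!
Order labels lexicographically, versions descending and then depths ascending. A node passes the
check exactly when the label of its next hop is strictly smaller than its own, so if every node of
a loop passed, the label of the start would be strictly smaller than itself.
-/

open Function OrderDual

section Periodic

variable {V ι : Type*} [Preorder ι] {f : V → V} {φ : V → ι} {v : V} {k : ℕ}

lemma strictAntiOn_comp_iterate (h : ∀ i < k, φ (f (f^[i] v)) < φ (f^[i] v)) :
    StrictAntiOn (fun i ↦ φ (f^[i] v)) (Set.Iic k) :=
  strictAntiOn_Iic_of_succ_lt fun i hi ↦ by
    simpa only [Nat.succ_eq_succ, iterate_succ_apply'] using h i hi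

lemma exists_not_comp_lt_of_isPeriodicPt (φ : V → ι) (hk : 0 < k) (hv : IsPeriodicPt f k v) :
    ∃ i < k, ¬ φ (f (f^[i] v)) < φ (f^[i] v) := by
  by_contra! h
  have descent : φ (f^[k] v) < φ v :=
    strictAntiOn_comp_iterate h (Set.mem_Iic.2 hk.le) Set.self_mem_Iic hk
  exact descent.ne (congrArg φ hv.eq)

end Periodic

section VersionDepth

variable {V α β : Type*}

/-- The version-depth label of a node, for comparing nodes by decreasing version number and, among
equal versions, by increasing depth. The order dual reverses the order on versions. -/
def versionDepthLabel (ver : V → α) (dep : V → β) (u : V) : αᵒᵈ ×ₗ β :=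
  toLex (toDual (ver u), dep u)

lemma versionDepthLabel_lt_iff [LT α] [LT β] {ver : V → α} {dep : V → β} {u w : V} :
    versionDepthLabel ver dep w < versionDepthLabel ver dep u ↔
      ver w > ver u ∨ (ver w = ver u ∧ dep w < dep u) := by
  simp only [versionDepthLabel, Prod.Lex.toLex_lt_toLex, toDual_lt_toDual, toDual_inj, gt_iff_lt]

theorem loop_locally_detectable_general [Preorder α] [Preorder β] {f : V → V} {v : V} {k : ℕ}
    (ver : V → α) (dep : V → β) (hk : 0 < k) (hv : IsPeriodicPt f k v) :
    ∃ i < k, ¬ (ver (f (f^[i] v)) > ver (f^[i] v) ∨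
      (ver (f (f^[i] v)) = ver (f^[i] v) ∧ dep (f (f^[i] v)) < dep (f^[i] v))) := by
  simpa only [versionDepthLabel_lt_iff] using
    exists_not_comp_lt_of_isPeriodicPt (versionDepthLabel ver dep) hk hv

end VersionDepth

/-- Local detectability of loops (Theorem 2): if there is a forwarding loop
avoiding the destination, then some node on the loop fails the local
version-depth check. -/
theorem loop_locally_detectable
    {V : Type*} (t : V) (f : V → V) (ver dep : V → ℕ)
    (v : V) (k : ℕ) (hv : v ≠ t) (hk : 1 ≤ k)
    (hloop : f^[k] v = v) (havoid : ∀ i : ℕ, i < k → f^[i] v ≠ t) :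
    ∃ i : ℕ, i < k ∧
      ¬ (ver (f (f^[i] v)) > ver (f^[i] v) ∨
         (ver (f (f^[i] v)) = ver (f^[i] v) ∧
          dep (f (f^[i] v)) < dep (f^[i] v))) :=
  loop_locally_detectable_general ver dep hk hloop
end

section
/- Let V be a finite nonempty type, t : V, f : V → V with f t = t, and ver, dep : V → ℕ labels such that for every v ≠ t either ver (f v) > ver v, or ver (f v) = ver v and dep v = dep (f v) + 1. Let M be the maximum of ver over V. Then the nodes carrying the largest version number form a correct forwarding tree: for every v with ver v = M, all iterates f^[i] v for i ≤ dep v also satisfy ver (f^[i] v) = M, and f^[dep v] v = t. (Claim in the proof of Theorem 2 that nodes using the largest version number never forward to nodes of other versions and reach the destination in exactly dep v hops.) -/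
/-!
A node of maximal version other than `t` cannot have a next hop of larger version, so its next hop
has the same version and depth smaller by one. Hence the nodes of maximal version are closed under
forwarding, and among them the depth is a countdown that can only stop at `t`.
-/

section Forwarding

variable {V α : Type*} {t : V} {f : V → V}

theorem iterate_eq_of_mapsTo_of_eq_succ {s : Set V} {d : V → ℕ} (ht : f t = t)
    (hs : Set.MapsTo f s s) (hd : ∀ v ∈ s, v ≠ t → d v = d (f v) + 1) {v : V} (hv : v ∈ s) :
    f^[d v] v = t := by
  by_cases hvt : v = t
  · rw [hvt]
    exact Function.iterate_fixed ht _
  · rw [hd v hv hvt, Function.iterate_succ_apply]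
    exact iterate_eq_of_mapsTo_of_eq_succ ht hs hd (hs hv)
termination_by d v
decreasing_by
  have hdv := hd v hv hvt
  omega

/-- The invariant of the update scheme for version labels `ver` and depth labels `dep`, where `f` is
the next-hop map towards the destination `t`: away from `t`, a hop either increases the version,
or keeps it and decreases the depth by one. The second case is written with a successor on the
right, so that it excludes depth `0`. -/
def IsForwardingLabelling [LT α] (t : V) (f : V → V) (ver : V → α) (dep : V → ℕ) : Prop :=
  ∀ v, v ≠ t → ver v < ver (f v) ∨ (ver (f v) = ver v ∧ dep v = dep (f v) + 1)

namespace IsForwardingLabelling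

variable [LT α] {ver : V → α} {dep : V → ℕ} {M : α} {v : V}

theorem mapsTo_ver_eq (hlab : IsForwardingLabelling t f ver dep) (ht : f t = t)
    (hM : ∀ w, ¬ M < ver w) : Set.MapsTo f {v | ver v = M} {v | ver v = M} := by
  rintro v rfl
  by_cases hvt : v = t
  · rw [hvt, ht]
    rfl
  · exact ((hlab v hvt).resolve_left (hM (f v))).1

theorem iterate_dep_eq (hlab : IsForwardingLabelling t f ver dep) (ht : f t = t)
    (hM : ∀ w, ¬ M < ver w) (hv : ver v = M) : f^[dep v] v = t := by
  refine iterate_eq_of_mapsTo_of_eq_succ ht (hlab.mapsTo_ver_eq ht hM) ?_ hv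
  rintro w rfl hwt
  exact ((hlab w hwt).resolve_left (hM (f w))).2

end IsForwardingLabelling

theorem largest_version_forms_tree_general [LT α] {ver : V → α} {dep : V → ℕ} (ht : f t = t)
    (hlab : IsForwardingLabelling t f ver dep) {M : α} (hM : ∀ w, ¬ M < ver w) {v : V}
    (hv : ver v = M) : (∀ i : ℕ, ver (f^[i] v) = M) ∧ f^[dep v] v = t :=
  ⟨fun i => (hlab.mapsTo_ver_eq ht hM).iterate i hv, hlab.iterate_dep_eq ht hM hv⟩

end Forwarding

/-- Nodes carrying the largest version number form a correct forwarding tree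
(claim in the proof of Theorem 2): they never forward to nodes of other
versions and reach the destination in exactly `dep v` hops. -/
theorem largest_version_forms_tree
    {V : Type*} [Fintype V] [Nonempty V] (t : V) (f : V → V)
    (ver dep : V → ℕ) (ht : f t = t)
    (hlab : ∀ v : V, v ≠ t →
      ver (f v) > ver v ∨ (ver (f v) = ver v ∧ dep v = dep (f v) + 1))
    (M : ℕ) (hM : M = Finset.univ.sup ver) :
    ∀ v : V, ver v = M →
      (∀ i : ℕ, i ≤ dep v → ver (f^[i] v) = M) ∧ f^[dep v] v = t := by
  have hmax : ∀ w, ¬ M < ver w := fun w => (hM ▸ Finset.le_sup (Finset.mem_univ w)).not_gt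
  exact fun v hv => (largest_version_forms_tree_general ht hlab hmax hv).imp_left fun h i _ => h i
end

section
/- Fix l ≥ 2 and consider nodes 0, …, l−1 together with a destination node d. The old rule forwards node i to node i+1 for i < l−1 and node l−1 to d; the new rule forwards node 0 to d and node i to node i−1 for i ≥ 1. For a set S ⊆ {0, …, l−1} of updated nodes, the mixed forwarding function g_S forwards i according to the new rule if i ∈ S and according to the old rule otherwise, and fixes d. Then g_S is loop-free (no node i ∈ {0, …, l−1} satisfies g_S^[k](i) = i for some k ≥ 1) if and only if S is downward closed, i.e. i ∈ S whenever j ∈ S and i ≤ j. (Structure of the chain instance of Figure 1: updating node j while node j−1 is not yet updated creates the two-cycle {j−1, j}, and conversely every initial segment of updates is loop-free.) -/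
/-- The mixed forwarding function of the chain instance of Figure 1: nodes
`0, …, l-1` plus a destination (modeled as node `l`).  An updated node
`i ∈ S` uses the new rule (node `0` forwards to the destination, node `i ≥ 1`
forwards to `i - 1`), while a non-updated node `i < l` uses the old rule
(forward to `i + 1`, node `l - 1` forwarding to the destination `l`); the
destination (and anything outside the chain) is a fixed point. -/
def chainFwd (l : ℕ) (S : Finset ℕ) (i : ℕ) : ℕ :=
  if i < l then (if i ∈ S then (if i = 0 then l else i - 1) else i + 1) else i

/-!
A chain node `i + 1` that is updated before node `i` forms the two-cycle `{i, i + 1}` with it.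
If there is no such pair, the updated chain nodes form an initial segment: its members forward
down to `0` and from there to the destination, while the others forward up to the destination.
Hence each hop decreases the number of hops left to the destination, which rules out loops.
-/

open Function

theorem notMem_periodicPts_iff {α : Type*} {f : α → α} {x : α} :
    x ∉ periodicPts f ↔ ∀ n, 1 ≤ n → f^[n] x ≠ x := by
  simp only [mem_periodicPts, IsPeriodicPt, IsFixedPt, not_exists, not_and, gt_iff_lt,
    Nat.one_le_iff_ne_zero, Nat.pos_iff_ne_zero, ne_eq]

theorem notMem_periodicPts_of_rank_lt {α β : Type*} [Preorder β] {f : α → α} {rank : α → β}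
    (hrank : ∀ y, ¬IsFixedPt f y → rank (f y) < rank y) {x : α} (hx : ¬IsFixedPt f x) :
    x ∉ periodicPts f := by
  rintro ⟨n, hn, hper⟩
  have rank_le : ∀ y, rank (f y) ≤ rank y := fun y ↦ by
    by_cases hy : IsFixedPt f y
    · rw [hy.eq]
    · exact (hrank y hy).le
  have rank_antitone : Antitone fun m ↦ rank (f^[m] x) :=
    antitone_nat_of_succ_le fun m ↦ by
      simpa only [iterate_succ_apply'] using rank_le (f^[m] x)
  have rank_lt : rank (f^[n] x) < rank x :=
    (rank_antitone (Nat.one_le_of_lt hn)).trans_lt (hrank x hx)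
  rw [hper.eq] at rank_lt
  exact rank_lt.false

section ChainFwd

variable {l i : ℕ} {S : Finset ℕ}

theorem chainFwd_of_le (hi : l ≤ i) : chainFwd l S i = i :=
  if_neg hi.not_gt

theorem chainFwd_of_notMem (hi : i < l) (hiS : i ∉ S) : chainFwd l S i = i + 1 := by
  rw [chainFwd, if_pos hi, if_neg hiS]

theorem chainFwd_zero_of_mem (h0 : 0 ∈ S) : chainFwd l S 0 = l := by
  rcases l.eq_zero_or_pos with rfl | hl
  · exact chainFwd_of_le le_rfl
  · rw [chainFwd, if_pos hl, if_pos h0, if_pos rfl]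

theorem chainFwd_succ_of_mem (hi : i + 1 < l) (hiS : i + 1 ∈ S) :
    chainFwd l S (i + 1) = i := by
  rw [chainFwd, if_pos hi, if_pos hiS, if_neg i.succ_ne_zero, Nat.add_sub_cancel]

theorem isFixedPt_chainFwd_iff : IsFixedPt (chainFwd l S) i ↔ l ≤ i := by
  refine ⟨fun hfix ↦ ?_, chainFwd_of_le⟩
  contrapose! hfix with hi
  unfold IsFixedPt chainFwd
  split_ifs <;> omega

theorem isPeriodicPt_two_chainFwd (hi : i + 1 < l) (hiS : i ∉ S) (hsucc : i + 1 ∈ S) :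
    IsPeriodicPt (chainFwd l S) 2 (i + 1) :=
  calc chainFwd l S (chainFwd l S (i + 1))
    _ = chainFwd l S i := by rw [chainFwd_succ_of_mem hi hsucc]
    _ = i + 1 := chainFwd_of_notMem (Nat.lt_of_succ_lt hi) hiS

/-- The number of hops from node `i` to the destination `l` when the updated nodes of the chain
form an initial segment. Truncated subtraction gives the value `0` at the destination and beyond. -/
def hopsToDest (l : ℕ) (S : Finset ℕ) (i : ℕ) : ℕ :=
  if i < l ∧ i ∈ S then i + 1 else l - i

theorem hopsToDest_of_mem (hi : i < l) (hiS : i ∈ S) : hopsToDest l S i = i + 1 :=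
  if_pos ⟨hi, hiS⟩

theorem hopsToDest_of_notMem (hiS : i ∉ S) : hopsToDest l S i = l - i :=
  if_neg fun h ↦ hiS h.2

theorem hopsToDest_of_le (hi : l ≤ i) : hopsToDest l S i = 0 := by
  rw [hopsToDest, if_neg fun h ↦ hi.not_gt h.1, Nat.sub_eq_zero_of_le hi]

theorem hopsToDest_chainFwd_add_one (hS : ∀ j, j + 1 < l → j + 1 ∈ S → j ∈ S) (hi : i < l) :
    hopsToDest l S (chainFwd l S i) + 1 = hopsToDest l S i := by
  by_cases hiS : i ∈ S
  · rw [hopsToDest_of_mem hi hiS]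
    cases i with
    | zero => rw [chainFwd_zero_of_mem hiS, hopsToDest_of_le le_rfl]
    | succ j =>
      rw [chainFwd_succ_of_mem hi hiS, hopsToDest_of_mem (Nat.lt_of_succ_lt hi) (hS j hi hiS)]
  · rw [chainFwd_of_notMem hi hiS, hopsToDest_of_notMem hiS]
    rcases (Nat.succ_le_of_lt hi).eq_or_lt with hlast | hsucc
    · rw [hopsToDest_of_le hlast.ge]
      omega
    · rw [hopsToDest_of_notMem fun hmem ↦ hiS (hS i hsucc hmem)]
      omega

theorem forall_notMem_periodicPts_chainFwd_iff :
    (∀ i < l, i ∉ periodicPts (chainFwd l S)) ↔ ∀ i, i + 1 < l → i + 1 ∈ S → i ∈ S := by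
  constructor
  · intro hloop i hi hsucc
    by_contra hiS
    exact hloop (i + 1) hi
      (mk_mem_periodicPts two_pos (isPeriodicPt_two_chainFwd hi hiS hsucc))
  · intro hS i hi
    refine notMem_periodicPts_of_rank_lt (rank := hopsToDest l S) (fun j hj ↦ ?_)
      (isFixedPt_chainFwd_iff.not.mpr hi.not_ge)
    have hjl : j < l := not_le.mp (isFixedPt_chainFwd_iff.not.mp hj)
    exact Nat.lt_of_succ_le (hopsToDest_chainFwd_add_one hS hjl).le

end ChainFwd

/-- Structure of the chain instance of Figure 1: the mixed forwarding
function `chainFwd l S` is loop-free if and only if the set `S` of updated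
nodes is downward closed. -/
theorem chain_loop_free_iff_downward_closed
    (l : ℕ) (hl : 2 ≤ l) (S : Finset ℕ) (hS : ∀ i ∈ S, i < l) :
    (∀ i : ℕ, i < l → ∀ k : ℕ, 1 ≤ k → (chainFwd l S)^[k] i ≠ i) ↔
      (∀ i j : ℕ, j ∈ S → i ≤ j → i ∈ S) := by
  simp only [← notMem_periodicPts_iff, forall_notMem_periodicPts_chainFwd_iff]
  constructor
  · intro hpred i j hj hij
    have mem_antitone : Antitone (· ∈ S) :=
      antitone_nat_of_succ_le fun m hm ↦ hpred m (hS _ hm) hm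
    exact mem_antitone hij hj
  · intro hdown i _ hsucc
    exact hdown i (i + 1) hsucc i.le_succ
end
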